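/- If R : Fin n → ℝ is generalized pairwise valid, then there exist a feasible pairing scheme f and a generalized pairwise valid rate assignment R' such that: R' i = H[X i] whenever f i = root; R' i = H[X i | X j] whenever f i = child j; for each matched pair {i, j}, (R' i, R' j) ∈ S i j and Q i (R' i) + Q j (R' j) = sInf { Q i a + Q j b : (a, b) ∈ S i j }; and Σ_{i} Q i (R' i) ≤ Σ_{i} Q i (R i). -/

import Mathlib

open MeasureTheory ProbabilityTheory

/-- Shannon entropy (in nats) of a random variable. -/
noncomputable def shEntropy {Ω : Type*} [MeasurableSpace Ω] {S : Type*}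
    (μ : Measure Ω) (X : Ω → S) : ℝ :=
  ∑' x : S, Real.negMulLog (μ (X ⁻¹' {x})).toReal

/-- Conditional Shannon entropy `H[X | Y]`. -/
noncomputable def shCondEntropy {Ω : Type*} [MeasurableSpace Ω] {S T : Type*}
    (μ : Measure Ω) (X : Ω → S) (Y : Ω → T) : ℝ :=
  ∑' y : T, (μ (Y ⁻¹' {y})).toReal * shEntropy (ProbabilityTheory.cond μ (Y ⁻¹' {y})) X

/-- The power needed at node `i` (channel gain `γ i`) to support rate `r` (in nats). -/
noncomputable def Qpow {n : ℕ} (γ : Fin n → ℝ) (i : Fin n) (r : ℝ) : ℝ :=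
  (Real.exp r - 1) / γ i

/-- The two-dimensional Slepian-Wolf region of the pair of sources `X i`, `X j`. -/
def SWregion {Ω S : Type*} [MeasurableSpace Ω] {n : ℕ}
    (μ : Measure Ω) (X : Fin n → Ω → S) (i j : Fin n) : Set (ℝ × ℝ) :=
  {q : ℝ × ℝ | q.1 ≥ shCondEntropy μ (X i) (X j) ∧ q.2 ≥ shCondEntropy μ (X j) (X i) ∧
    q.1 + q.2 ≥ shEntropy μ (fun ω => (X i ω, X j ω))}

/-- The Slepian-Wolf region intersected with the peak power constraints. -/
def Sregion {Ω S : Type*} [MeasurableSpace Ω] {n : ℕ}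
    (μ : Measure Ω) (X : Fin n → Ω → S) (γ : Fin n → ℝ) (Pmax : ℝ)
    (i j : Fin n) : Set (ℝ × ℝ) :=
  {q : ℝ × ℝ | q ∈ SWregion μ X i j ∧ Qpow γ i q.1 ≤ Pmax ∧ Qpow γ j q.2 ≤ Pmax}

/-- `X i` is initially decodable under `R` if `R i ≥ H[X i]`, or together with some
other source `X j` the rate pair `(R i, R j)` lies in their Slepian-Wolf region. -/
def InitiallyDecodable {Ω S : Type*} [MeasurableSpace Ω] {n : ℕ}
    (μ : Measure Ω) (X : Fin n → Ω → S) (R : Fin n → ℝ) (i : Fin n) : Prop :=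
  R i ≥ shEntropy μ (X i) ∨ ∃ j : Fin n, j ≠ i ∧ (R i, R j) ∈ SWregion μ X i j

/-- The generalized pairwise property: each source is initially decodable, or is
decodable via a chain of sources starting from an initially decodable one. -/
def GenPairwiseProperty {Ω S : Type*} [MeasurableSpace Ω] {n : ℕ}
    (μ : Measure Ω) (X : Fin n → Ω → S) (R : Fin n → ℝ) : Prop :=
  ∀ i : Fin n, InitiallyDecodable μ X R i ∨
    ∃ (k : ℕ) (s : ℕ → Fin n), 1 ≤ k ∧
      InitiallyDecodable μ X R (s 1) ∧
      (∀ j : ℕ, 2 ≤ j → j ≤ k → R (s j) ≥ shCondEntropy μ (X (s j)) (X (s (j - 1)))) ∧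
      R i ≥ shCondEntropy μ (X i) (X (s k))

/-- A rate assignment is generalized pairwise valid if it satisfies the generalized
pairwise property and every node meets the peak power constraint. -/
def GenPairwiseValid {Ω S : Type*} [MeasurableSpace Ω] {n : ℕ}
    (μ : Measure Ω) (X : Fin n → Ω → S) (γ : Fin n → ℝ) (Pmax : ℝ)
    (R : Fin n → ℝ) : Prop :=
  GenPairwiseProperty μ X R ∧ ∀ i : Fin n, Qpow γ i (R i) ≤ Pmax

/-- The decoding relation of a rate assignment: `a` can help decode `b` if
`H[X b | X a] ≤ R b`. -/
def decRel {Ω S : Type*} [MeasurableSpace Ω] {n : ℕ}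
    (μ : Measure Ω) (X : Fin n → Ω → S) (R : Fin n → ℝ) : Fin n → Fin n → Prop :=
  fun a b => shCondEntropy μ (X b) (X a) ≤ R b

/-- The mode of a node in a pairing scheme: a root (transmitting at full entropy),
a child of some node `j` (transmitting at conditional entropy given `X j`), or
matched with some node `j` (jointly decoded with `X j`). -/
inductive PairMode (n : ℕ) where
  | root : PairMode n
  | child (j : Fin n) : PairMode n
  | matched (j : Fin n) : PairMode n
deriving DecidableEq

/-- A pairing scheme: each node is a root, a child of another node, or matched with
another node; matching is symmetric, no two nodes are children of each other, and the
associated undirected graph is acyclic. -/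
structure PairingScheme (n : ℕ) where
  mode : Fin n → PairMode n
  child_ne : ∀ i j : Fin n, mode i = PairMode.child j → j ≠ i
  matched_ne : ∀ i j : Fin n, mode i = PairMode.matched j → j ≠ i
  matched_symm : ∀ i j : Fin n, mode i = PairMode.matched j ↔ mode j = PairMode.matched i
  no_mutual_child : ∀ i j : Fin n, i ≠ j →
    ¬(mode i = PairMode.child j ∧ mode j = PairMode.child i)
  acyclic : (SimpleGraph.fromRel fun i j =>
    mode i = PairMode.matched j ∨ mode i = PairMode.child j ∨
      mode j = PairMode.child i).IsAcyclic

/-- A pairing scheme is feasible if all the prescribed transmissions can be realized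
within the peak power constraint. -/
def PairingScheme.Feasible {Ω S : Type*} [MeasurableSpace Ω] {n : ℕ}
    (f : PairingScheme n) (μ : Measure Ω) (X : Fin n → Ω → S) (γ : Fin n → ℝ)
    (Pmax : ℝ) : Prop :=
  (∀ i : Fin n, f.mode i = PairMode.root → Qpow γ i (shEntropy μ (X i)) ≤ Pmax) ∧
  (∀ i j : Fin n, f.mode i = PairMode.child j →
    Qpow γ i (shCondEntropy μ (X i) (X j)) ≤ Pmax) ∧
  (∀ i j : Fin n, f.mode i = PairMode.matched j →
    (Sregion μ X γ Pmax i j).Nonempty)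

/-- The minimum sum power of a jointly decoded pair `(i, j)`. -/
noncomputable def pairPower {Ω S : Type*} [MeasurableSpace Ω] {n : ℕ}
    (μ : Measure Ω) (X : Fin n → Ω → S) (γ : Fin n → ℝ) (Pmax : ℝ)
    (i j : Fin n) : ℝ :=
  sInf {x : ℝ | ∃ a b : ℝ, (a, b) ∈ Sregion μ X γ Pmax i j ∧ x = Qpow γ i a + Qpow γ j b}

/-- The power contribution of node `i` in a pairing scheme; each member of a matched
pair contributes half of the pair power, so that the pair is counted once in total. -/
noncomputable def schemeContrib {Ω S : Type*} [MeasurableSpace Ω] {n : ℕ}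
    (μ : Measure Ω) (X : Fin n → Ω → S) (γ : Fin n → ℝ) (Pmax : ℝ)
    (f : PairingScheme n) (i : Fin n) : ℝ :=
  match f.mode i with
  | PairMode.root => Qpow γ i (shEntropy μ (X i))
  | PairMode.child j => Qpow γ i (shCondEntropy μ (X i) (X j))
  | PairMode.matched j => (1 / 2) * pairPower μ X γ Pmax i j

/-- The total cost (sum power) of a feasible pairing scheme: roots contribute the power
of their entropy, children the power of their conditional entropy, and each matched
pair (counted once) its minimum sum power. -/
noncomputable def schemeCost {Ω S : Type*} [MeasurableSpace Ω] {n : ℕ}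
    (μ : Measure Ω) (X : Fin n → Ω → S) (γ : Fin n → ℝ) (Pmax : ℝ)
    (f : PairingScheme n) : ℝ :=
  ∑ i : Fin n, schemeContrib μ X γ Pmax f i

/-!
Whether a rate assignment `R` has the generalized pairwise property is a reachability question:
every node must be reachable, along `decRel`, from an initially decodable one. Fix a maximal
matching of the pairs whose rates lie in their Slepian-Wolf region. By maximality an unmatched
initially decodable node either affords its full entropy or is decodable from a matched node, so
every node is reachable from the matched and the full-entropy nodes. Hanging each remaining node
below its predecessor on a shortest path yields a pairing scheme, acyclic because the distance
drops from child to parent.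

Lowering the roots and children to their prescribed entropies and replacing each matched pair of
rates by a minimizer of the pair power does not increase the sum power. The new rates are again
valid, since in an acyclic scheme following parents leads to a root or a matched node.
-/

open Relation Function

section Graph

variable {V : Type*} {G : SimpleGraph V}

/- A vertex of maximal rank on a cycle has two distinct neighbours of at most its rank. -/
theorem isAcyclic_of_subsingleton_adj_le {α : Type*} [LinearOrder α] (rank : V → α)
    (h : ∀ v, {u | G.Adj v u ∧ rank u ≤ rank v}.Subsingleton) : G.IsAcyclic := by
  classical
  intro a c hc
  obtain ⟨v, hv, hmax⟩ := c.support.toFinset.exists_max_image rank ⟨a, by simp⟩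
  rw [List.mem_toFinset] at hv
  let d := c.rotate v hv
  have hd : d.IsCycle := hc.rotate hv
  have rank_le {u : V} (hu : u ∈ d.support) : rank u ≤ rank v :=
    hmax u (by simpa [d] using hu)
  exact hd.snd_ne_penultimate <| h v
    ⟨d.adj_snd hd.not_nil, rank_le (d.getVert_mem_support _)⟩
    ⟨(d.adj_penultimate hd.not_nil).symm, rank_le (d.getVert_mem_support _)⟩

theorem exists_walk_edges_eq_map_range {s : ℕ → V} (hs : ∀ k, G.Adj (s k) (s (k + 1))) (N : ℕ) :
    ∃ w : G.Walk (s 0) (s N), w.edges = (List.range N).map fun k => s(s k, s (k + 1)) := by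
  induction N with
  | zero => exact ⟨.nil, rfl⟩
  | succ N ih =>
    obtain ⟨w, hw⟩ := ih
    exact ⟨w.concat (hs N), by simp [SimpleGraph.Walk.edges_concat, hw, List.range_succ]⟩

/- A walk that never turns back is a path when the graph is acyclic, so its length is bounded. -/
theorem exists_add_two_eq_of_isAcyclic [Finite V] (hG : G.IsAcyclic) {s : ℕ → V}
    (hs : ∀ k, G.Adj (s k) (s (k + 1))) : ∃ k, s (k + 2) = s k := by
  have := Fintype.ofFinite V
  by_contra! hne
  obtain ⟨w, hw⟩ := exists_walk_edges_eq_map_range hs (Fintype.card V)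
  have hpath : w.IsPath := by
    rw [hG.isPath_iff_isChain, hw, List.isChain_map, List.isChain_range]
    intro k _
    grind [Sym2.eq_iff]
  have hlen : w.length = Fintype.card V := by simp [← w.length_edges, hw]
  exact hpath.length_lt.ne hlen

/-- A maximal matching of `G`, encoded as the involution that exchanges matched vertices and fixes
the unmatched ones. -/
structure IsMaximalMatching (G : SimpleGraph V) (m : V → V) : Prop where
  involutive : Involutive m
  adj : ∀ v, m v ≠ v → G.Adj v (m v)
  maximal : ∀ v w, G.Adj v w → m v = v → m w ≠ w

theorem exists_isMaximalMatching [Finite V] (G : SimpleGraph V) :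
    ∃ m, IsMaximalMatching G m := by
  classical
  obtain ⟨m, ⟨hinv, hadj⟩, hmax⟩ := Set.Finite.exists_maximalFor (fun m : V → V => {v | m v ≠ v})
    {m | Involutive m ∧ ∀ v, m v ≠ v → G.Adj v (m v)} (Set.toFinite _)
    ⟨id, fun _ => rfl, fun v hv => absurd rfl hv⟩
  refine ⟨m, hinv, hadj, fun v w hvw hv hw => ?_⟩
  let m' : V → V := fun u => if u = v then w else if u = w then v else m u
  have hinv' : Involutive m' := fun u => by
    have := hinv u
    grind
  have hadj' (u : V) (hu : m' u ≠ u) : G.Adj u (m' u) := by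
    have := hadj u
    grind [G.adj_comm]
  have hle : {u | m u ≠ u} ⊆ {u | m' u ≠ u} := fun u (hu : m u ≠ u) => by
    change m' u ≠ u
    grind
  have hv' : m' v ≠ v := by simpa [m'] using hvw.ne'
  exact hmax ⟨hinv', hadj'⟩ hle hv' hv

end Graph

section Reachability

variable {V : Type*} {r : V → V → Prop}

theorem exists_seq_of_reflTransGen {a b : V} (h : ReflTransGen r a b) :
    ∃ (k : ℕ) (s : ℕ → V), s 0 = a ∧ s k = b ∧ ∀ j < k, r (s j) (s (j + 1)) := by
  induction h with
  | refl => exact ⟨0, fun _ => a, rfl, rfl, fun _ hj => absurd hj (Nat.not_lt_zero _)⟩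
  | @tail b c _ hbc ih =>
    obtain ⟨k, s, h0, hk, hs⟩ := ih
    refine ⟨k + 1, update s (k + 1) c, by simpa using h0, by simp, fun j hj => ?_⟩
    obtain hjk | rfl := Nat.lt_succ_iff_lt_or_eq.mp hj
    · rw [update_of_ne (by lia), update_of_ne (by lia)]
      exact hs j hjk
    · rw [update_of_ne (by lia), update_self, hk]
      exact hbc

theorem exists_parent_rank_lt {B : Set V} (h : ∀ v, ∃ b ∈ B, ReflTransGen r b v) :
    ∃ (parent : V → V) (rank : V → ℕ),
      ∀ v ∉ B, r (parent v) v ∧ rank (parent v) < rank v := by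
  classical
  let succs : Set V → Set V := fun A => {w | ∃ v ∈ A, r v w}
  have hlevel (v : V) : ∃ k, v ∈ succs^[k] B := by
    obtain ⟨b, hb, hbv⟩ := h v
    induction hbv with
    | refl => exact ⟨0, hb⟩
    | @tail u w _ huw ih =>
      obtain ⟨k, hk⟩ := ih
      exact ⟨k + 1, by rw [iterate_succ_apply']; exact ⟨u, hk, huw⟩⟩
  let rank : V → ℕ := fun v => Nat.find (hlevel v)
  have hparent (v : V) (hv : v ∉ B) : ∃ u, r u v ∧ rank u < rank v := by
    have hspec : v ∈ succs^[rank v] B := Nat.find_spec (hlevel v)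
    cases hk : rank v with
    | zero => exact absurd (by simpa [hk] using hspec) hv
    | succ k =>
      rw [hk, iterate_succ_apply'] at hspec
      obtain ⟨u, hu, huv⟩ := hspec
      exact ⟨u, huv, Nat.lt_succ_of_le (Nat.find_min' _ hu)⟩
  have (v : V) : ∃ u, v ∉ B → r u v ∧ rank u < rank v := by
    by_cases hv : v ∈ B
    · exact ⟨v, fun h => absurd hv h⟩
    · exact (hparent v hv).imp fun _ hu _ => hu
  choose parent hparent using this
  exact ⟨parent, rank, hparent⟩

end Reachability

section Involution

variable {ι : Type*} {m : ι → ι}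

theorem sum_le_sum_of_involutive {M : Type*} [AddCommMonoid M] [LinearOrder M]
    [IsOrderedCancelAddMonoid M] [Fintype ι] (hm : Involutive m) {f g : ι → M}
    (h : ∀ i, f i + f (m i) ≤ g i + g (m i)) : ∑ i, f i ≤ ∑ i, g i := by
  have hsum (u : ι → M) : ∑ i, (u i + u (m i)) = ∑ i, u i + ∑ i, u i := by
    rw [Finset.sum_add_distrib, hm.bijective.sum_comp]
  have hdouble : ∑ i, f i + ∑ i, f i ≤ ∑ i, g i + ∑ i, g i := by
    simpa only [hsum] using Finset.sum_le_sum fun i (_ : i ∈ Finset.univ) => h i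
  by_contra! hlt
  exact hdouble.not_gt (add_lt_add hlt hlt)

theorem exists_symmetric_choice_of_involutive {α : Type*} [Nonempty α] [LinearOrder ι]
    (hm : Involutive m) {P : ι → ι → α → α → Prop}
    (hsymm : ∀ i j a b, P i j a b → P j i b a) (h : ∀ i, m i ≠ i → ∃ a b, P i (m i) a b) :
    ∃ T : ι → α, ∀ i, m i ≠ i → P i (m i) (T i) (T (m i)) := by
  choose! a b hab using h
  refine ⟨fun i => if i < m i then a i else b (m i), fun i hi => ?_⟩
  rcases hi.lt_or_gt with hlt | hgt
  · have hP : P (m i) i (a (m i)) (b (m i)) := by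
      simpa only [hm i] using hab (m i) (by rw [hm i]; exact hi.symm)
    simpa only [hm i, if_neg hlt.not_gt, if_pos hlt] using hsymm _ _ _ _ hP
  · simpa only [hm i, if_pos hgt, if_neg hgt.not_gt] using hab i hi

end Involution

section Power

variable {n : ℕ} {γ : Fin n → ℝ} {i : Fin n}

theorem monotone_qpow (hγ : 0 ≤ γ i) : Monotone (Qpow γ i) := fun a b hab => by
  unfold Qpow
  gcongr

theorem continuous_qpow (γ : Fin n → ℝ) (i : Fin n) : Continuous (Qpow γ i) := by
  unfold Qpow
  fun_prop

theorem le_mul_of_qpow_le (hγ : 0 < γ i) {r P : ℝ} (h : Qpow γ i r ≤ P) : r ≤ P * γ i := by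
  have hexp : Real.exp r - 1 ≤ P * γ i := (div_le_iff₀ hγ).mp h
  linarith [Real.add_one_le_exp r]

end Power

section Regions

variable {Ω S : Type*} [MeasurableSpace Ω] {μ : Measure Ω} {n : ℕ} {X : Fin n → Ω → S}
  {γ : Fin n → ℝ} {Pmax : ℝ} {i j : Fin n} {a b : ℝ}

theorem shEntropy_prodMk_comm {T : Type*} (μ : Measure Ω) (Y : Ω → S) (Z : Ω → T) :
    shEntropy μ (fun ω => (Y ω, Z ω)) = shEntropy μ (fun ω => (Z ω, Y ω)) := by
  unfold shEntropy
  rw [← (Equiv.prodComm T S).tsum_eq]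
  refine tsum_congr fun x => ?_
  congr 3
  ext ω
  simp [Prod.ext_iff, and_comm]

theorem summable_negMulLog_of_finite_range {Y : Ω → S} (hY : (Set.range Y).Finite) :
    Summable fun x => Real.negMulLog (μ (Y ⁻¹' {x})).toReal := by
  refine summable_of_hasFiniteSupport (hY.subset fun x hx => ?_)
  by_contra hxY
  exact hx (by simp [Set.preimage_singleton_eq_empty.mpr hxY])

theorem swap_mem_swRegion (h : (a, b) ∈ SWregion μ X i j) : (b, a) ∈ SWregion μ X j i := by
  obtain ⟨ha, hb, hab⟩ := h
  refine ⟨hb, ha, ?_⟩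
  rw [shEntropy_prodMk_comm]
  simpa only [add_comm] using hab

theorem swap_mem_sregion (h : (a, b) ∈ Sregion μ X γ Pmax i j) :
    (b, a) ∈ Sregion μ X γ Pmax j i :=
  ⟨swap_mem_swRegion h.1, h.2.2, h.2.1⟩

theorem isCompact_sregion (hi : 0 < γ i) (hj : 0 < γ j) :
    IsCompact (Sregion μ X γ Pmax i j) := by
  have hQi := continuous_qpow γ i
  have hQj := continuous_qpow γ j
  have hclosed : IsClosed (Sregion μ X γ Pmax i j) := by
    refine ((isClosed_le ?_ ?_).and ((isClosed_le ?_ ?_).and (isClosed_le ?_ ?_))).and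
      ((isClosed_le ?_ ?_).and (isClosed_le ?_ ?_)) <;> fun_prop
  refine (isCompact_Icc (a := (shCondEntropy μ (X i) (X j), shCondEntropy μ (X j) (X i)))
    (b := (Pmax * γ i, Pmax * γ j))).of_isClosed_subset hclosed ?_
  rintro ⟨a, b⟩ ⟨⟨ha, hb, -⟩, hPa, hPb⟩
  exact ⟨⟨ha, hb⟩, le_mul_of_qpow_le hi hPa, le_mul_of_qpow_le hj hPb⟩

theorem isLeast_pairPower (hi : 0 < γ i) (hj : 0 < γ j) (hne : (Sregion μ X γ Pmax i j).Nonempty) :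
    IsLeast {x : ℝ | ∃ a b : ℝ, (a, b) ∈ Sregion μ X γ Pmax i j ∧ x = Qpow γ i a + Qpow γ j b}
      (pairPower μ X γ Pmax i j) := by
  have hcont : Continuous fun q : ℝ × ℝ => Qpow γ i q.1 + Qpow γ j q.2 :=
    ((continuous_qpow γ i).comp continuous_fst).add ((continuous_qpow γ j).comp continuous_snd)
  have himage : (fun q : ℝ × ℝ => Qpow γ i q.1 + Qpow γ j q.2) '' Sregion μ X γ Pmax i j =
      {x : ℝ | ∃ a b : ℝ, (a, b) ∈ Sregion μ X γ Pmax i j ∧ x = Qpow γ i a + Qpow γ j b} := by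
    ext x
    simp only [Set.mem_image, Prod.exists, Set.mem_ofPred_eq, eq_comm]
  unfold pairPower
  rw [← himage]
  exact ((isCompact_sregion hi hj).image hcont).isLeast_sInf (hne.image _)

theorem pairPower_comm : pairPower μ X γ Pmax i j = pairPower μ X γ Pmax j i := by
  unfold pairPower
  congr 1
  ext x
  constructor <;> rintro ⟨a, b, hab, rfl⟩ <;> exact ⟨b, a, swap_mem_sregion hab, add_comm _ _⟩

end Regions

section Decodability

variable {Ω S : Type*} [MeasurableSpace Ω] {μ : Measure Ω} {n : ℕ} {X : Fin n → Ω → S}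
  {R : Fin n → ℝ}

theorem genPairwiseProperty_iff_reflTransGen :
    GenPairwiseProperty μ X R ↔
      ∀ i, ∃ b, InitiallyDecodable μ X R b ∧ ReflTransGen (decRel μ X R) b i := by
  refine forall_congr' fun i => ⟨?_, ?_⟩
  · rintro (hi | ⟨k, s, hk, hinit, hstep, hlast⟩)
    · exact ⟨i, hi, .refl⟩
    · have hchain : ReflTransGen (decRel μ X R on s) 1 k :=
        reflTransGen_of_succ_of_le _ (fun j hj => hstep (j + 1) (by grind) (by grind)) hk
      exact ⟨s 1, hinit, (hchain.lift s fun _ _ h => h).tail hlast⟩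
  · rintro ⟨b, hb, hbi⟩
    cases hbi with
    | refl => exact .inl hb
    | tail hbc hci =>
      obtain ⟨k, s, rfl, rfl, hs⟩ := exists_seq_of_reflTransGen hbc
      refine .inr ⟨k + 1, fun j => s (j - 1), by lia, hb, fun j hj hjk => ?_, hci⟩
      obtain ⟨l, rfl⟩ := Nat.exists_eq_add_of_le' hj
      exact hs l (by lia)

variable (μ X R) in
/-- The graph of the pairs of sources that are jointly decodable under `R`; the pairing scheme
takes its matched pairs among its edges. -/
def swGraph : SimpleGraph (Fin n) where
  Adj i j := i ≠ j ∧ (R i, R j) ∈ SWregion μ X i j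
  symm := ⟨fun _ _ h => ⟨h.1.symm, swap_mem_swRegion h.2⟩⟩
  loopless := ⟨fun _ h => h.1 rfl⟩

theorem GenPairwiseProperty.exists_reflTransGen_of_isMaximalMatching
    (hR : GenPairwiseProperty μ X R) {m : Fin n → Fin n}
    (hm : IsMaximalMatching (swGraph μ X R) m) (i : Fin n) :
    ∃ b ∈ {b | m b ≠ b ∨ shEntropy μ (X b) ≤ R b}, ReflTransGen (decRel μ X R) b i := by
  obtain ⟨b, hb, hbi⟩ := genPairwiseProperty_iff_reflTransGen.mp hR i
  by_cases hmb : m b = b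
  · obtain hfull | ⟨j, hj, hSW⟩ := hb
    · exact ⟨b, .inr hfull, hbi⟩
    · exact ⟨j, .inl (hm.maximal b j ⟨hj.symm, hSW⟩ hmb), hbi.head hSW.1⟩
  · exact ⟨b, .inl hmb, hbi⟩

end Decodability

namespace PairingScheme

section Structure

variable {n : ℕ}

theorem isAcyclic_of_rank_lt {α : Type*} [LinearOrder α] {mode : Fin n → PairMode n}
    (rank : Fin n → α) (matched_symm : ∀ i j, mode i = .matched j → mode j = .matched i)
    (rank_lt : ∀ i j, mode i = .child j → rank j < rank i) :
    (SimpleGraph.fromRel fun i j =>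
      mode i = .matched j ∨ mode i = .child j ∨ mode j = .child i).IsAcyclic := by
  refine isAcyclic_of_subsingleton_adj_le rank fun v => ?_
  have hmode {u : Fin n} (h : (SimpleGraph.fromRel fun i j =>
      mode i = .matched j ∨ mode i = .child j ∨ mode j = .child i).Adj v u)
      (hle : rank u ≤ rank v) : mode v = .matched u ∨ mode v = .child u := by
    have hnot : mode u ≠ .child v := fun h => (rank_lt u v h).not_ge hle
    have := matched_symm u v
    rw [SimpleGraph.fromRel_adj] at h
    tauto
  rintro u ⟨hvu, hu⟩ w ⟨hvw, hw⟩
  have hu' := hmode hvu hu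
  have hw' := hmode hvw hw
  grind

/-- The pairing scheme with the given modes, where the absence of cycles is certified by a rank
that strictly decreases from each child to its parent. -/
def ofRank {α : Type*} [LinearOrder α] (mode : Fin n → PairMode n) (rank : Fin n → α)
    (matched_ne : ∀ i j, mode i = .matched j → j ≠ i)
    (matched_symm : ∀ i j, mode i = .matched j → mode j = .matched i)
    (rank_lt : ∀ i j, mode i = .child j → rank j < rank i) : PairingScheme n where
  mode := mode
  child_ne i j h := fun hji => (rank_lt i j h).ne (congrArg rank hji)
  matched_ne := matched_ne
  matched_symm i j := ⟨matched_symm i j, matched_symm j i⟩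
  no_mutual_child i j _ h := (rank_lt i j h.1).asymm (rank_lt j i h.2)
  acyclic := isAcyclic_of_rank_lt rank matched_symm rank_lt

theorem wellFounded_child (f : PairingScheme n) :
    WellFounded fun j i => f.mode i = .child j := by
  rw [wellFounded_iff_isEmpty_descending_chain]
  refine ⟨fun ⟨s, hs⟩ => ?_⟩
  obtain ⟨k, hk⟩ := exists_add_two_eq_of_isAcyclic f.acyclic (s := s) fun k =>
    (SimpleGraph.fromRel_adj _ _ _).mpr ⟨(f.child_ne _ _ (hs k)).symm, .inl (.inr (.inl (hs k)))⟩
  exact f.no_mutual_child _ _ (f.child_ne _ _ (hs k)).symm ⟨hs k, hk ▸ hs (k + 1)⟩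

/-- The node with which `i` is matched, or `i` itself when it is a root or a child. -/
def mate (f : PairingScheme n) (i : Fin n) : Fin n :=
  match f.mode i with
  | .matched j => j
  | _ => i

variable {f : PairingScheme n} {i j : Fin n}

theorem mate_eq_of_mode_eq_matched (h : f.mode i = .matched j) : f.mate i = j := by
  simp only [mate, h]

theorem mode_eq_matched_mate (h : f.mate i ≠ i) : f.mode i = .matched (f.mate i) := by
  unfold mate at h ⊢
  split at h <;> simp_all

theorem mate_involutive (f : PairingScheme n) : Involutive f.mate := fun i => by
  by_cases hi : f.mate i = i
  · rw [hi, hi]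
  · exact mate_eq_of_mode_eq_matched ((f.matched_symm _ _).mp (mode_eq_matched_mate hi))

end Structure

variable {Ω S : Type*} [MeasurableSpace Ω] {n : ℕ}

/-- The rates `R` suffice for every transmission prescribed by the scheme `f`, possibly with
slack. -/
structure IsSupportedBy (f : PairingScheme n) (μ : Measure Ω) (X : Fin n → Ω → S)
    (R : Fin n → ℝ) : Prop where
  root : ∀ i, f.mode i = .root → shEntropy μ (X i) ≤ R i
  child : ∀ i j, f.mode i = .child j → shCondEntropy μ (X i) (X j) ≤ R i
  matched : ∀ i j, f.mode i = .matched j → (R i, R j) ∈ SWregion μ X i j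

/-- The rates `R'` are those described by the scheme `f`: roots and children transmit at exactly
their prescribed entropy, and matched pairs attain their minimum sum power. -/
structure IsRealizedBy (f : PairingScheme n) (μ : Measure Ω) (X : Fin n → Ω → S)
    (γ : Fin n → ℝ) (Pmax : ℝ) (R' : Fin n → ℝ) : Prop where
  root : ∀ i, f.mode i = .root → R' i = shEntropy μ (X i)
  child : ∀ i j, f.mode i = .child j → R' i = shCondEntropy μ (X i) (X j)
  matched : ∀ i j, f.mode i = .matched j → (R' i, R' j) ∈ Sregion μ X γ Pmax i j ∧
    Qpow γ i (R' i) + Qpow γ j (R' j) = pairPower μ X γ Pmax i j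

variable {f : PairingScheme n} {μ : Measure Ω} {X : Fin n → Ω → S} {γ : Fin n → ℝ} {Pmax : ℝ}
  {R R' : Fin n → ℝ}

theorem IsSupportedBy.feasible (hf : f.IsSupportedBy μ X R) (hγ : ∀ i, 0 ≤ γ i)
    (hpow : ∀ i, Qpow γ i (R i) ≤ Pmax) : f.Feasible μ X γ Pmax :=
  ⟨fun i h => (monotone_qpow (hγ i) (hf.root i h)).trans (hpow i),
    fun i j h => (monotone_qpow (hγ i) (hf.child i j h)).trans (hpow i),
    fun i j h => ⟨(R i, R j), hf.matched i j h, hpow i, hpow j⟩⟩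

theorem Feasible.exists_isRealizedBy (hf : f.Feasible μ X γ Pmax) (hγ : ∀ i, 0 < γ i) :
    ∃ R', f.IsRealizedBy μ X γ Pmax R' := by
  obtain ⟨T, hT⟩ := exists_symmetric_choice_of_involutive f.mate_involutive
    (P := fun i j a b => (a, b) ∈ Sregion μ X γ Pmax i j ∧
      Qpow γ i a + Qpow γ j b = pairPower μ X γ Pmax i j)
    (fun i j a b h => ⟨swap_mem_sregion h.1, by rw [add_comm, h.2, pairPower_comm]⟩)
    (fun i hi => by
      obtain ⟨a, b, hab, heq⟩ :=
        (isLeast_pairPower (hγ i) (hγ _) (hf.2.2 i _ (mode_eq_matched_mate hi))).1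
      exact ⟨a, b, hab, heq.symm⟩)
  refine ⟨fun i => match f.mode i with
    | .root => shEntropy μ (X i)
    | .child j => shCondEntropy μ (X i) (X j)
    | .matched _ => T i, fun i h => by simp only [h], fun i j h => by simp only [h],
    fun i j h => ?_⟩
  obtain rfl := mate_eq_of_mode_eq_matched h
  simpa only [h, (f.matched_symm _ _).mp h] using hT i (f.matched_ne _ _ h)

theorem IsRealizedBy.genPairwiseProperty (hR' : f.IsRealizedBy μ X γ Pmax R') :
    GenPairwiseProperty μ X R' := by
  refine genPairwiseProperty_iff_reflTransGen.mpr fun i => ?_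
  induction i using f.wellFounded_child.induction with
  | _ i ih =>
    cases h : f.mode i with
    | root => exact ⟨i, .inl (hR'.root i h).ge, .refl⟩
    | matched j => exact ⟨i, .inr ⟨j, f.matched_ne i j h, (hR'.matched i j h).1.1⟩, .refl⟩
    | child j =>
      obtain ⟨b, hb, hbj⟩ := ih j h
      exact ⟨b, hb, hbj.tail (hR'.child i j h).ge⟩

theorem IsRealizedBy.qpow_le (hR' : f.IsRealizedBy μ X γ Pmax R') (hf : f.Feasible μ X γ Pmax)
    (i : Fin n) : Qpow γ i (R' i) ≤ Pmax := by
  cases h : f.mode i with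
  | root => exact hR'.root i h ▸ hf.1 i h
  | child j => exact hR'.child i j h ▸ hf.2.1 i j h
  | matched j => exact (hR'.matched i j h).1.2.1

theorem IsRealizedBy.genPairwiseValid (hR' : f.IsRealizedBy μ X γ Pmax R')
    (hf : f.Feasible μ X γ Pmax) : GenPairwiseValid μ X γ Pmax R' :=
  ⟨hR'.genPairwiseProperty, hR'.qpow_le hf⟩

theorem IsRealizedBy.le_of_mate_eq (hR' : f.IsRealizedBy μ X γ Pmax R')
    (hR : f.IsSupportedBy μ X R) {i : Fin n} (hi : f.mate i = i) : R' i ≤ R i := by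
  cases h : f.mode i with
  | root => exact (hR'.root i h).trans_le (hR.root i h)
  | child j => exact (hR'.child i j h).trans_le (hR.child i j h)
  | matched j => exact absurd ((mate_eq_of_mode_eq_matched h).symm.trans hi) (f.matched_ne i j h)

theorem IsRealizedBy.sum_qpow_le (hR' : f.IsRealizedBy μ X γ Pmax R')
    (hR : f.IsSupportedBy μ X R) (hγ : ∀ i, 0 < γ i) (hpow : ∀ i, Qpow γ i (R i) ≤ Pmax) :
    ∑ i, Qpow γ i (R' i) ≤ ∑ i, Qpow γ i (R i) := by
  refine sum_le_sum_of_involutive f.mate_involutive fun i => ?_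
  by_cases hi : f.mate i = i
  · have hle := monotone_qpow (hγ i).le (hR'.le_of_mate_eq hR hi)
    rw [hi]
    exact add_le_add hle hle
  · have h := mode_eq_matched_mate hi
    have hmem : (R i, R (f.mate i)) ∈ Sregion μ X γ Pmax i (f.mate i) :=
      ⟨hR.matched i _ h, hpow i, hpow _⟩
    rw [(hR'.matched i _ h).2]
    exact (isLeast_pairPower (hγ i) (hγ _) ⟨_, hmem⟩).2 ⟨_, _, hmem, rfl⟩

end PairingScheme

theorem GenPairwiseProperty.exists_isSupportedBy {Ω S : Type*} [MeasurableSpace Ω]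
    {μ : Measure Ω} {n : ℕ} {X : Fin n → Ω → S} {R : Fin n → ℝ}
    (hR : GenPairwiseProperty μ X R) : ∃ f : PairingScheme n, f.IsSupportedBy μ X R := by
  classical
  obtain ⟨m, hm⟩ := exists_isMaximalMatching (swGraph μ X R)
  obtain ⟨parent, rank, hparent⟩ :=
    exists_parent_rank_lt (hR.exists_reflTransGen_of_isMaximalMatching hm)
  let mode : Fin n → PairMode n := fun i =>
    if m i ≠ i then .matched (m i) else if shEntropy μ (X i) ≤ R i then .root
    else .child (parent i)
  have hroot (i) (h : mode i = .root) : shEntropy μ (X i) ≤ R i := by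
    grind
  have hchild (i j) (h : mode i = .child j) : decRel μ X R j i ∧ rank j < rank i := by
    obtain ⟨hi, hfull, rfl⟩ : m i = i ∧ ¬ shEntropy μ (X i) ≤ R i ∧ parent i = j := by grind
    exact hparent i (by simp [hi, hfull])
  have hmatched (i j) : mode i = .matched j ↔ m i ≠ i ∧ m i = j := by
    grind
  have hmatched_symm (i j) (h : mode i = .matched j) : mode j = .matched i := by
    obtain ⟨hi, rfl⟩ := (hmatched i j).mp h
    exact (hmatched _ _).mpr ⟨by rw [hm.involutive i]; exact hi.symm, hm.involutive i⟩
  refine ⟨.ofRank mode rank (fun i j h => ?_) hmatched_symm fun i j h => (hchild i j h).2,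
    hroot, fun i j h => (hchild i j h).1, fun i j h => ?_⟩ <;>
    obtain ⟨hi, rfl⟩ := (hmatched i j).mp h
  · exact hi
  · exact (hm.adj i hi).2

theorem exists_scheme_le_of_genPairwiseValid_general
    {Ω S : Type*} [MeasurableSpace Ω] [MeasurableSpace S] [MeasurableSingletonClass S]
    (μ : Measure Ω) [IsProbabilityMeasure μ] {n : ℕ}
    (X : Fin n → Ω → S) (hX : ∀ i, Measurable (X i))
    (hcount : ∀ i, (Set.range (X i)).Countable)
    (hent : ∀ i, Summable fun x => Real.negMulLog (μ (X i ⁻¹' {x})).toReal)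
    (γ : Fin n → ℝ) (hγ : ∀ i, 0 < γ i) (Pmax : ℝ)
    (R : Fin n → ℝ) (hR : GenPairwiseValid μ X γ Pmax R) :
    ∃ (f : PairingScheme n) (R' : Fin n → ℝ),
      f.Feasible μ X γ Pmax ∧ GenPairwiseValid μ X γ Pmax R' ∧
      (∀ i : Fin n, f.mode i = PairMode.root → R' i = shEntropy μ (X i)) ∧
      (∀ i j : Fin n, f.mode i = PairMode.child j → R' i = shCondEntropy μ (X i) (X j)) ∧
      (∀ i j : Fin n, f.mode i = PairMode.matched j →
        (R' i, R' j) ∈ Sregion μ X γ Pmax i j ∧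
        Qpow γ i (R' i) + Qpow γ j (R' j) = pairPower μ X γ Pmax i j) ∧
      (∑ i : Fin n, Qpow γ i (R' i)) ≤ (∑ i : Fin n, Qpow γ i (R i)) := by
  obtain ⟨hprop, hpow⟩ := hR
  obtain ⟨f, hf⟩ := hprop.exists_isSupportedBy
  have hfeas := hf.feasible (fun i => (hγ i).le) hpow
  obtain ⟨R', hR'⟩ := hfeas.exists_isRealizedBy hγ
  exact ⟨f, R', hfeas, hR'.genPairwiseValid hfeas, hR'.root, hR'.child, hR'.matched,
    hR'.sum_qpow_le hf hγ hpow⟩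

/-- Any generalized pairwise valid rate assignment is dominated (in sum power) by a
generalized pairwise valid rate assignment described by a feasible pairing scheme. -/
theorem exists_scheme_le_of_genPairwiseValid
    {Ω S : Type*} [MeasurableSpace Ω] [MeasurableSpace S] [MeasurableSingletonClass S]
    (μ : Measure Ω) [IsProbabilityMeasure μ] {n : ℕ} (hn : 1 ≤ n)
    (X : Fin n → Ω → S) (hX : ∀ i, Measurable (X i))
    (hfin : ∀ i, (Set.range (X i)).Finite)
    (γ : Fin n → ℝ) (hγ : ∀ i, 0 < γ i) (Pmax : ℝ) (hP : 0 < Pmax)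
    (R : Fin n → ℝ) (hR : GenPairwiseValid μ X γ Pmax R) :
    ∃ (f : PairingScheme n) (R' : Fin n → ℝ),
      f.Feasible μ X γ Pmax ∧ GenPairwiseValid μ X γ Pmax R' ∧
      (∀ i : Fin n, f.mode i = PairMode.root → R' i = shEntropy μ (X i)) ∧
      (∀ i j : Fin n, f.mode i = PairMode.child j → R' i = shCondEntropy μ (X i) (X j)) ∧
      (∀ i j : Fin n, f.mode i = PairMode.matched j →
        (R' i, R' j) ∈ Sregion μ X γ Pmax i j ∧
        Qpow γ i (R' i) + Qpow γ j (R' j) = pairPower μ X γ Pmax i j) ∧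
      (∑ i : Fin n, Qpow γ i (R' i)) ≤ (∑ i : Fin n, Qpow γ i (R i)) :=
  exists_scheme_le_of_genPairwiseValid_general μ X hX (fun i => (hfin i).countable)
    (fun i => summable_negMulLog_of_finite_range (hfin i)) γ hγ Pmax R hR
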